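/- arXiv:2201.00539 — 3 statements merged into one kernel-verified Lean document; each statement's English description precedes it below -/
import Mathlib

section
/- Let rk be a rank function satisfying (A1)–(A4) and the 3D line–plane intersection axiom (A10). If A, B, C and A', B', C' are points with rk{A,B,C} = 3 and rk{A',B',C'} = 3, then there exists a point M with rk{A,B,C,M} = 3 and rk{A',B',C',M} = 3; that is, the intersection of the two planes contains at least one point. -/
/-!
The line `A'B'` of the second plane meets the plane `ABC` in a point `M` by (A10). Submodularity
makes spans monotone: as `M` adds no rank to `{A', B'}`, it adds none to `{A', B', C'}` either.
-/

section Submodular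

variable {L R : Type*} [Lattice L] [AddCommMonoid R] [PartialOrder R] [IsOrderedCancelAddMonoid R]
  {f : L → R} {x y z : L}

theorem map_sup_le_add_of_submodular (hsub : ∀ a b, f (a ⊔ b) + f (a ⊓ b) ≤ f a + f b)
    (hinf : 0 ≤ f (x ⊓ y)) : f (x ⊔ y) ≤ f x + f y :=
  (le_add_of_nonneg_right hinf).trans (hsub x y)

theorem map_sup_eq_of_le_of_submodular (hmono : Monotone f)
    (hsub : ∀ a b, f (a ⊔ b) + f (a ⊓ b) ≤ f a + f b) (hxy : x ≤ y) (hx : f (x ⊔ z) = f x) :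
    f (y ⊔ z) = f y := by
  have hsup : y ⊔ (x ⊔ z) = y ⊔ z := by rw [← sup_assoc, sup_eq_left.mpr hxy]
  have hinf : f x ≤ f (y ⊓ (x ⊔ z)) := hmono (le_inf hxy le_sup_left)
  refine le_antisymm (le_of_add_le_add_right (a := f x) ?_) (hmono le_sup_left)
  calc
    f (y ⊔ z) + f x ≤ f (y ⊔ (x ⊔ z)) + f (y ⊓ (x ⊔ z)) := by rw [hsup]; gcongr
    _ ≤ f y + f (x ⊔ z) := hsub y (x ⊔ z)
    _ = f y + f x := by rw [hx]

end Submodular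

/-- With rank axioms (A1)–(A4) and the 3D line–plane intersection
axiom (A10), the intersection of two planes contains at least one point. -/
theorem stmt_1 {P : Type*} [DecidableEq P] (rk : Finset P → ℕ)
    (hA1 : ∀ X : Finset P, rk X ≤ X.card)
    (hA2 : ∀ X Y : Finset P, X ⊆ Y → rk X ≤ rk Y)
    (hA3 : ∀ X Y : Finset P, rk (X ∪ Y) + rk (X ∩ Y) ≤ rk X + rk Y)
    (hA4 : ∀ p : P, rk {p} = 1)
    (hA10 : ∀ A B C A' B' : P, rk {A, B, C} = 3 → rk {A', B'} = 2 →
      ∃ M : P, rk {A, B, C, M} = 3 ∧ rk {A', B', M} = 2)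
    (A B C A' B' C' : P)
    (hABC : rk {A, B, C} = 3)
    (hA'B'C' : rk {A', B', C'} = 3) :
    ∃ M : P, rk {A, B, C, M} = 3 ∧ rk {A', B', C', M} = 3 := by
  have hline : rk {A', B'} = 2 := by
    have hupper : rk {A', B'} ≤ 2 := (hA1 _).trans Finset.card_le_two
    have hlower : rk ({A', B'} ∪ {C'}) ≤ rk {A', B'} + rk {C'} :=
      map_sup_le_add_of_submodular hA3 (Nat.zero_le _)
    simp only [Finset.insert_union, Finset.singleton_union, hA'B'C', hA4] at hlower
    lia
  obtain ⟨M, hMABC, hMA'B'⟩ := hA10 A B C A' B' hABC hline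
  have hspan : rk ({A', B'} ∪ {M}) = rk {A', B'} := by
    simpa only [Finset.insert_union, Finset.singleton_union, hline] using hMA'B'
  have hplane : rk ({A', B', C'} ∪ {M}) = rk {A', B', C'} :=
    map_sup_eq_of_le_of_submodular (fun X Y ↦ hA2 X Y) hA3 (by grind) hspan
  refine ⟨M, hMABC, ?_⟩
  simpa only [Finset.insert_union, Finset.singleton_union, hA'B'C'] using hplane
end

section
/- Let rk be a rank function satisfying (A1)–(A4). If M, N, Q, A, B, C are points with rk{A,B,C} = 3, rk{A,B,M} = 2, rk{A,C,N} = 2, rk{B,C,Q} = 2 and additionally rk{A,M} = 2 (i.e. A ≠ M), then rk{A,C,M,N,Q} = 3. -/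
/-!
Say that a finite set spans a point when adding the point does not change the rank; submodularity
makes this relation monotone. Each of `M`, `N`, `Q` is spanned by a side of the triangle, so
`{A, B, C, M, N, Q}` has rank `3`. Conversely, as `A ≠ M`, the line `AM` spans `B`, so
`{A, C, M}` already spans the whole triangle.
-/

/-- Submodularity of a function on a lattice, in the additive form that avoids subtraction; for the
lattice `Finset P` this is axiom (A3) of a rank function. -/
def IsSubmodular {α R : Type*} [Lattice α] [Add R] [LE R] (f : α → R) : Prop :=
  ∀ a b, f (a ⊔ b) + f (a ⊓ b) ≤ f a + f b

/-- The closure (flat) spanned by a finite set `X` with respect to a rank function `rk`. It is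
a `Set`, since a finite set of points may span infinitely many points. -/
def rankClosure {P R : Type*} [DecidableEq P] (rk : Finset P → R) (X : Finset P) : Set P :=
  {p | rk (insert p X) = rk X}

section OrderedMonoid

variable {P R : Type*} [DecidableEq P] [AddCommMonoid R] [PartialOrder R]
  [IsOrderedCancelAddMonoid R] {rk : Finset P → R}

theorem rankClosure_mono (hmono : Monotone rk) (hsub : IsSubmodular rk) :
    Monotone (rankClosure rk) := by
  intro X Y hXY p (hp : rk (insert p X) = rk X)
  have hunion : insert p X ∪ Y = insert p Y := by
    rw [Finset.insert_union, Finset.union_eq_right.2 hXY]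
  have hinter : X ⊆ insert p X ∩ Y := Finset.subset_inter (Finset.subset_insert p X) hXY
  have hle : rk (insert p Y) + rk X ≤ rk Y + rk X :=
    calc
      rk (insert p Y) + rk X ≤ rk (insert p X ∪ Y) + rk (insert p X ∩ Y) := by
        rw [hunion]
        gcongr
        exact hmono hinter
      _ ≤ rk (insert p X) + rk Y := hsub _ _
      _ = rk Y + rk X := by rw [hp, add_comm]
  exact (le_of_add_le_add_right hle).antisymm (hmono (Finset.subset_insert p Y))

theorem rank_union_eq_of_subset_rankClosure (hmono : Monotone rk) (hsub : IsSubmodular rk)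
    {X S : Finset P} (hS : ↑S ⊆ rankClosure rk X) : rk (X ∪ S) = rk X := by
  induction S using Finset.induction_on with
  | empty => rw [Finset.union_empty]
  | insert p S _ ih =>
    rw [Finset.coe_insert, Set.insert_subset_iff] at hS
    have hp : p ∈ rankClosure rk (X ∪ S) :=
      rankClosure_mono hmono hsub Finset.subset_union_left hS.1
    calc
      rk (X ∪ insert p S) = rk (insert p (X ∪ S)) := by rw [Finset.union_insert]
      _ = rk (X ∪ S) := hp
      _ = rk X := ih hS.2

end OrderedMonoid

section UnitRank

variable {P : Type*} [DecidableEq P] {rk : Finset P → ℕ}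

theorem rank_insert_le (hsub : IsSubmodular rk) {p : P} (hp : rk {p} ≤ 1) (X : Finset P) :
    rk (insert p X) ≤ rk X + 1 :=
  calc
    rk (insert p X) ≤ rk ({p} ∪ X) + rk ({p} ∩ X) := Nat.le_add_right _ _
    _ ≤ rk {p} + rk X := hsub _ _
    _ ≤ rk X + 1 := by linarith

theorem mem_rankClosure_of_rank_insert_lt (hmono : Monotone rk) (hsub : IsSubmodular rk)
    {p q : P} {X : Finset P} (hq : rk {q} ≤ 1) (h : rk (insert p X) < rk (insert q X)) :
    p ∈ rankClosure rk X :=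
  (Nat.le_of_lt_succ (h.trans_le (rank_insert_le hsub hq X))).antisymm
    (hmono (Finset.subset_insert p X))

theorem rank_triangle_union_side_points (hpoint : ∀ p, rk {p} ≤ 1) (hmono : Monotone rk)
    (hsub : IsSubmodular rk) {A B C M N Q : P} (hABC : rk {A, B, C} = 3)
    (hABM : rk {A, B, M} = 2) (hACN : rk {A, C, N} = 2) (hBCQ : rk {B, C, Q} = 2) :
    rk ({A, B, C} ∪ {M, N, Q}) = 3 := by
  have mem_of_side {a b c p : P} (habc : ({a, b, c} : Finset P) = {A, B, C})
      (hp : rk {a, b, p} = 2) : p ∈ rankClosure rk {A, B, C} := by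
    have hside : p ∈ rankClosure rk {a, b} := by
      apply mem_rankClosure_of_rank_insert_lt hmono hsub (hpoint c)
      rw [show ({p, a, b} : Finset P) = {a, b, p} by grind,
        show ({c, a, b} : Finset P) = {A, B, C} by grind, hp, hABC]
      decide
    exact rankClosure_mono hmono hsub (by grind) hside
  have hM : M ∈ rankClosure rk {A, B, C} := mem_of_side rfl hABM
  have hN : N ∈ rankClosure rk {A, B, C} := mem_of_side (c := B) (by grind) hACN
  have hQ : Q ∈ rankClosure rk {A, B, C} := mem_of_side (c := A) (by grind) hBCQ
  rw [rank_union_eq_of_subset_rankClosure hmono hsub (by simp [Set.insert_subset_iff, hM, hN, hQ]),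
    hABC]

end UnitRank

theorem stmt_4_general {P : Type*} [DecidableEq P] {rk : Finset P → ℕ}
    (hpoint : ∀ p, rk {p} ≤ 1) (hmono : Monotone rk) (hsub : IsSubmodular rk)
    {M N Q A B C : P} (hABC : rk {A, B, C} = 3) (hABM : rk {A, B, M} = 2)
    (hACN : rk {A, C, N} = 2) (hBCQ : rk {B, C, Q} = 2) (hAM : rk {A, M} = 2) :
    rk {A, C, M, N, Q} = 3 := by
  have hB : B ∈ rankClosure rk {A, M} :=
    calc
      rk {B, A, M} = rk {A, B, M} := by rw [Finset.insert_comm]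
      _ = rk {A, M} := by rw [hABM, hAM]
  have hB_plane : B ∈ rankClosure rk {A, C, M} := rankClosure_mono hmono hsub (by grind) hB
  apply le_antisymm
  · calc
      rk {A, C, M, N, Q} ≤ rk ({A, B, C} ∪ {M, N, Q}) := hmono (by grind)
      _ = 3 := rank_triangle_union_side_points hpoint hmono hsub hABC hABM hACN hBCQ
  · calc
      3 = rk {A, B, C} := hABC.symm
      _ ≤ rk {B, A, C, M} := hmono (by grind)
      _ = rk {A, C, M} := hB_plane
      _ ≤ rk {A, C, M, N, Q} := hmono (by grind)

/-- With the additional hypothesis A ≠ M (rk{A,M} = 2), one has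
rk{A,C,M,N,Q} = 3. -/
theorem stmt_4 {P : Type*} [DecidableEq P] (rk : Finset P → ℕ)
    (hA1 : ∀ X : Finset P, rk X ≤ X.card)
    (hA2 : ∀ X Y : Finset P, X ⊆ Y → rk X ≤ rk Y)
    (hA3 : ∀ X Y : Finset P, rk (X ∪ Y) + rk (X ∩ Y) ≤ rk X + rk Y)
    (hA4 : ∀ p : P, rk {p} = 1)
    (M N Q A B C : P)
    (hABC : rk {A, B, C} = 3)
    (hABM : rk {A, B, M} = 2)
    (hACN : rk {A, C, N} = 2)
    (hBCQ : rk {B, C, Q} = 2)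
    (hAM : rk {A, M} = 2) :
    rk {A, C, M, N, Q} = 3 :=
  stmt_4_general (fun p => (hA4 p).le) hA2 hA3 hABC hABM hACN hBCQ hAM
end

section
/- Let rk be a rank function satisfying (A1)–(A3). Let A, B, C, A', B', C', M, N, P be points with rk{A,B,C} = 3, rk{A',B',C'} = 3, rk{A,B,C,A',B',C'} = 4, rk{A,B,C,M} = 3, rk{A,B,C,N} = 3, rk{A',B',C',M} = 3, rk{A',B',C',N} = 3, rk{M,N} = 2 and rk{M,N,P} = 2. Then rk{A,B,C,P} = 3 and rk{A',B',C',P} = 3; that is, the line through M and N is contained in the intersection of the two planes. -/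
/-!
Say that `x` spans `y` if joining `y` to `x` does not increase the rank. For a monotone submodular
rank this relation is transitive, and the elements spanned by `x` are closed under joins. A plane
through `M` and `N` therefore spans `{M, N}`, hence everything that `{M, N}` spans.
-/

/-- The closure relation of a rank function `f`: `y` lies in the flat generated by `x`.
Elements of the lattice play the role of sets of points, so a point `p` enters as `{p}`. -/
def Spans {α R : Type*} [Max α] (f : α → R) (x y : α) : Prop :=
  f (x ⊔ y) = f x

section Lattice

variable {α R : Type*} [Lattice α] [AddCommMonoid R] [PartialOrder R]
  [IsOrderedCancelAddMonoid R] {f : α → R} {x y z : α}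

theorem Spans.mono_left (hmono : Monotone f)
    (hsub : ∀ a b, f (a ⊔ b) + f (a ⊓ b) ≤ f a + f b) (hxy : x ≤ y) (h : Spans f x z) :
    Spans f y z := by
  refine le_antisymm (le_of_add_le_add_right (a := f x) ?_) (hmono le_sup_left)
  calc f (y ⊔ z) + f x
      ≤ f (y ⊔ (x ⊔ z)) + f (y ⊓ (x ⊔ z)) := by
        gcongr
        · exact hmono (sup_le_sup_left le_sup_right y)
        · exact hmono (le_inf hxy le_sup_left)
    _ ≤ f y + f (x ⊔ z) := hsub y (x ⊔ z)
    _ = f y + f x := by rw [h]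

theorem Spans.sup_right (hmono : Monotone f)
    (hsub : ∀ a b, f (a ⊔ b) + f (a ⊓ b) ≤ f a + f b) (hy : Spans f x y) (hz : Spans f x z) :
    Spans f x (y ⊔ z) :=
  calc f (x ⊔ (y ⊔ z)) = f ((x ⊔ y) ⊔ z) := by rw [sup_assoc]
    _ = f (x ⊔ y) := hz.mono_left hmono hsub le_sup_left
    _ = f x := hy

theorem Spans.trans (hmono : Monotone f)
    (hsub : ∀ a b, f (a ⊔ b) + f (a ⊓ b) ≤ f a + f b) (hxy : Spans f x y) (hyz : Spans f y z) :
    Spans f x z := by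
  refine le_antisymm ?_ (hmono le_sup_left)
  calc f (x ⊔ z) ≤ f ((x ⊔ y) ⊔ z) := hmono (sup_le_sup_right le_sup_left z)
    _ = f (x ⊔ y) := hyz.mono_left hmono hsub le_sup_right
    _ = f x := hxy

theorem stmt_8_general (hmono : Monotone f)
    (hsub : ∀ a b, f (a ⊔ b) + f (a ⊓ b) ≤ f a + f b) {m n q : α}
    (hm : Spans f x m) (hn : Spans f x n) (hq : Spans f (m ⊔ n) q) : Spans f x q :=
  (hm.sup_right hmono hsub hn).trans hmono hsub hq

end Lattice

section Finset

variable {P R : Type*} [DecidableEq P] {rk : Finset P → R} {r : R} {A B C D : P}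

theorem spans_pair_iff (hAB : rk {A, B} = r) :
    Spans rk ({A} ⊔ {B}) {C} ↔ rk {A, B, C} = r := by
  simp [Spans, hAB]

theorem spans_triple_iff (hABC : rk {A, B, C} = r) :
    Spans rk {A, B, C} {D} ↔ rk {A, B, C, D} = r := by
  simp [Spans, hABC]

end Finset

/-- The line through two distinct common points M and N of two
distinct planes in a 3D space is contained in the intersection of the planes. -/
theorem stmt_8 {P : Type*} [DecidableEq P] (rk : Finset P → ℕ)
    (hA1 : ∀ X : Finset P, rk X ≤ X.card)
    (hA2 : ∀ X Y : Finset P, X ⊆ Y → rk X ≤ rk Y)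
    (hA3 : ∀ X Y : Finset P, rk (X ∪ Y) + rk (X ∩ Y) ≤ rk X + rk Y)
    (A B C A' B' C' M N Q : P)
    (hABC : rk {A, B, C} = 3)
    (hA'B'C' : rk {A', B', C'} = 3)
    (hdistinct : rk {A, B, C, A', B', C'} = 4)
    (hM1 : rk {A, B, C, M} = 3)
    (hN1 : rk {A, B, C, N} = 3)
    (hM2 : rk {A', B', C', M} = 3)
    (hN2 : rk {A', B', C', N} = 3)
    (hMN : rk {M, N} = 2)
    (hMNQ : rk {M, N, Q} = 2) :
    rk {A, B, C, Q} = 3 ∧ rk {A', B', C', Q} = 3 := by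
  simp only [← spans_triple_iff hABC, ← spans_triple_iff hA'B'C', ← spans_pair_iff hMN]
    at hM1 hN1 hM2 hN2 hMNQ ⊢
  exact ⟨stmt_8_general hA2 hA3 hM1 hN1 hMNQ, stmt_8_general hA2 hA3 hM2 hN2 hMNQ⟩
end
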